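/- For every natural number k there exists a finite connected graph G with cop number cn(G) > k such that G is isomorphic to the intersection graph of a finite family of axis-parallel closed line segments of unit length in ℝ³. Hence the maximum cop number of the classes 3-GRID (intersection graphs of axis-parallel segments in ℝ³) and of boxicity-3 graphs is unbounded. -/

import Mathlib

/-!
Take three layers, each a copy of `F²` for a finite field `F` with more than `k` elements, and draw
an arc from `a` in layer `i` to `b` in layer `i + 1` (modulo 3) when `a₂ + b₂ = a₁ b₁`. The vertices
of the graph are these arcs, two being adjacent when one continues the other.

*Representation.* Label the points of `F²` injectively by reals in `[0, 1]`. An arc `a → b` from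
layer `i` becomes the unit segment of direction `i + 2` on which coordinate `i` is the label of `a`
and coordinate `i + 1` is that of `b`. Segments of the same direction meet only if equal, and those
of layers `i` and `i + 1` meet exactly when the point they prescribe in coordinate `i + 1` is the
same (`Arc.adj_iff_seg_inter`).

*Escape.* The robber always moves to a continuation of the current arc `e`, keeping the invariant
that after the cops' move no cop is on an arc ending where the robber's arc ends. There are `|F|`
continuations. Since two distinct points of `F²` have at most one common out-neighbour, each cop can
spoil at most one of them (`Arc.threat_unique`), so fewer than `|F|` cops leave a safe one
(`Arc.exists_safe`); `not_copWin_of_escape` turns this into the failure of every cop strategy.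
-/

/-!  The game of cops and robber on a graph.

The cops first choose starting vertices, then the robber chooses a starting vertex;
the players then alternate turns, the cops moving first; each piece either stays or
moves to an adjacent vertex.  A cop strategy chooses, at each cop turn, the new cop
positions as a function of the full history of robber positions (which, together with
the strategy itself, determines the full history of the play).  The robber, having
full information, is modelled as an arbitrary legal trajectory.  -/

/-- The sequence of cop positions determined by the initial placement `init`, the cop
strategy `F` (a function of the history of robber positions), and the robber trajectory
`rob`; `copSeq init F rob n` is the position of the cops before the robber's `n`-th move,
i.e. the cops' `(n+1)`-st positions respond to the robber positions `rob 0, …, rob n`. -/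
def copSeq {V : Type*} {k : ℕ} (init : Fin k → V) (F : List V → Fin k → V)
    (rob : ℕ → V) : ℕ → Fin k → V
  | 0 => init
  | n + 1 => F ((List.range (n + 1)).map rob)

/-- A robber trajectory is legal if at each turn the robber stays or moves along an edge. -/
def RobberLegal {V : Type*} (G : SimpleGraph V) (rob : ℕ → V) : Prop :=
  ∀ n, rob (n + 1) = rob n ∨ G.Adj (rob n) (rob (n + 1))

/-- A sequence of cop positions is legal if at each turn every cop stays or moves along an edge. -/
def CopsLegal {V : Type*} {k : ℕ} (G : SimpleGraph V) (c : ℕ → Fin k → V) : Prop :=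
  ∀ n i, c (n + 1) i = c n i ∨ G.Adj (c n i) (c (n + 1) i)

/-- `k` cops have a winning strategy on `G`: there are initial positions and a legal
strategy capturing every legal robber trajectory in finitely many turns (a cop occupies
the robber's vertex, either after the cops' move or after the robber's move). -/
def CopWin {V : Type*} (G : SimpleGraph V) (k : ℕ) : Prop :=
  ∃ (init : Fin k → V) (F : List V → Fin k → V),
    ∀ rob : ℕ → V, RobberLegal G rob →
      CopsLegal G (copSeq init F rob) ∧
      ∃ n i, copSeq init F rob n i = rob n ∨ copSeq init F rob (n + 1) i = rob n

/-- The cop number of `G`: the least `k` such that `k` cops have a winning strategy. -/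
noncomputable def copNumber {V : Type*} (G : SimpleGraph V) : ℕ :=
  sInf { k | CopWin G k }

/-- An axis-parallel closed segment of unit length in `ℝ³`:
`{p + t • eᵢ : t ∈ [0,1]}` for a point `p` and a standard basis vector `eᵢ`. -/
def IsUnitAxisSegment (s : Set (EuclideanSpace ℝ (Fin 3))) : Prop :=
  ∃ (p : EuclideanSpace ℝ (Fin 3)) (i : Fin 3),
    s = {q | ∃ t ∈ Set.Icc (0 : ℝ) 1, q = p + t • EuclideanSpace.single i (1 : ℝ)}

/-! ### The graph of arcs and its threats -/

/-- A vertex of the construction over the field `F`: a layer `i`, and an arc `a → b` from the point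
`a ∈ F²` of layer `i` to the point `b ∈ F²` of layer `i + 1`. The arcs are the pairs with
`a₂ + b₂ = a₁ b₁`, so `(a₁, a₂, b₁)` determines one; the tuple is `(i, a₁, a₂, b₁)`. -/
abbrev Arc (F : Type) : Type := Fin 3 × F × F × F

namespace Arc

variable {F : Type} [Field F]

/-- The point of `F²`, in layer `v.1`, at which the arc starts. -/
def tail (v : Arc F) : F × F := (v.2.1, v.2.2.1)

/-- The point of `F²`, in layer `v.1 + 1`, at which the arc ends. -/
def head (v : Arc F) : F × F := (v.2.2.2, v.2.1 * v.2.2.2 - v.2.2.1)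

/-- The arc `v` continues the arc `u`: it starts where `u` ends. -/
def Follows (u v : Arc F) : Prop := v.1 = u.1 + 1 ∧ v.tail = u.head

/-- The arc that continues `u` and whose end has first coordinate `s`. -/
def next (u : Arc F) (s : F) : Arc F := (u.1 + 1, u.head.1, u.head.2, s)

/-- The two arcs end at the same point of the same layer. -/
def SameHead (u v : Arc F) : Prop := u.1 = v.1 ∧ u.head = v.head

lemma follows_next (u : Arc F) (s : F) : Follows u (u.next s) := ⟨rfl, rfl⟩

lemma ext_tail_head {u v : Arc F} (h1 : u.1 = v.1) (ht : u.tail = v.tail)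
    (hh : u.head = v.head) : u = v := by
  obtain ⟨i, a, b, c⟩ := u
  obtain ⟨j, a', b', c'⟩ := v
  simp only [tail, head, Prod.mk.injEq] at *
  tauto

variable (F) in
/-- The graph of arcs: two arcs are adjacent when one continues the other. -/
def graph : SimpleGraph (Arc F) where
  Adj u v := Follows u v ∨ Follows v u
  symm := ⟨fun _ _ h => h.symm⟩
  loopless := ⟨fun u h => by
    have key : ∀ i : Fin 3, i ≠ i + 1 := by decide
    rcases h with h | h <;> exact key _ h.1⟩

/-- A single cop, at `g`, threatens at most one continuation of the arc `e`, provided that `g` does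
not itself end where `e` ends. If `g` lies in the layer of `e`, this is the fact that two distinct
points of `F²` have at most one common out-neighbour. If `g` lies in the next layer, only the head
of `g` is threatened, and in the remaining layer only the tail of `g`. -/
lemma threat_unique {e g h h' : Arc F} {s s' : F} (hg : ¬ SameHead g e)
    (gh : h = g ∨ (graph F).Adj g h) (gh' : h' = g ∨ (graph F).Adj g h')
    (hs : SameHead h (e.next s)) (hs' : SameHead h' (e.next s')) : s = s' := by
  have key : ∀ {h : Arc F} {s : F}, (h = g ∨ (graph F).Adj g h) → SameHead h (e.next s) →
      (g.1 = e.1 + 1 ∧ s = g.2.2.2) ∨ (g.1 = e.1 + 2 ∧ s = g.2.1) ∨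
      (g.1 = e.1 ∧ g.head.1 * s - g.head.2 = e.head.1 * s - e.head.2) := by
    intro h s gh hs
    obtain ⟨hs1, hs2⟩ := hs
    have hh : h.2.2.2 = s := congrArg Prod.fst hs2
    have hh2 : h.2.1 * h.2.2.2 - h.2.2.1 = e.head.1 * s - e.head.2 := congrArg Prod.snd hs2
    change h.1 = e.1 + 1 at hs1
    rcases gh with rfl | ⟨h1, h2⟩ | ⟨h1, h2⟩
    · exact Or.inl ⟨hs1, hh.symm⟩
    · refine Or.inr (Or.inr ⟨?_, ?_⟩)
      · exact add_right_cancel (h1.symm.trans hs1)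
      · rw [← hh2, ← h2, hh]; rfl
    · refine Or.inr (Or.inl ⟨?_, ?_⟩)
      · rw [h1, hs1]; generalize e.1 = i; revert i; decide
      · rw [← hh]; exact (congrArg Prod.fst h2).symm
  have d1 : ∀ i : Fin 3, i + 1 ≠ i + 2 ∧ i + 1 ≠ i ∧ i + 2 ≠ i := by decide
  obtain ⟨n1, n2, n3⟩ := d1 e.1
  rcases key gh hs with ⟨a, b⟩ | ⟨a, b⟩ | ⟨a, b⟩ <;>
    rcases key gh' hs' with ⟨a', b'⟩ | ⟨a', b'⟩ | ⟨a', b'⟩ <;>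
    first
    | exact b.trans b'.symm
    | (exfalso; rw [a] at a'; first | exact n1 a' | exact n2 a' | exact n3 a' | exact n1 a'.symm
                                    | exact n2 a'.symm | exact n3 a'.symm)
    | skip
  have hm : (g.head.1 - e.head.1) * (s - s') = 0 := by linear_combination b - b'
  rcases mul_eq_zero.1 hm with h0 | h0
  · exfalso
    refine hg ⟨a, Prod.ext (sub_eq_zero.1 h0) ?_⟩
    linear_combination s * h0 - b
  · exact sub_eq_zero.1 h0

/-- Fewer than `|F|` cops, none of which is at an arc ending where `e` ends, leave a continuation
of `e` whose head no cop can occupy after one more move. -/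
lemma exists_safe [Fintype F] {j : ℕ} (hj : j < Fintype.card F) (e : Arc F) (C : Fin j → Arc F)
    (hC : ∀ i, ¬ SameHead (C i) e) :
    ∃ f, Follows e f ∧ ∀ i h, (h = C i ∨ (graph F).Adj (C i) h) → ¬ SameHead h f := by
  by_contra! hcon
  choose g h hg hs using fun s => hcon (e.next s) (follows_next e s)
  have hinj : Function.Injective g := by
    intro s s' hss
    have hg' := hg s'
    rw [← hss] at hg'
    exact threat_unique (hC (g s)) (hg s) hg' (hs s) (hs s')
  have := Fintype.card_le_of_injective g hinj
  simp at this
  omega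

lemma exists_start [Fintype F] {j : ℕ} (hj : j < Fintype.card F) (C : Fin j → Arc F) :
    ∃ e : Arc F, ∀ i, ¬ SameHead (C i) e := by
  have : ¬ Function.Surjective (fun i => (C i).2.2.2) := by
    intro hs
    have := Fintype.card_le_of_surjective _ hs
    simp at this
    omega
  simp only [Function.Surjective, not_forall, not_exists] at this
  obtain ⟨t, ht⟩ := this
  exact ⟨(0, 0, 0, t), fun i h => ht i (congrArg Prod.fst h.2)⟩

/-! ### Connectedness -/

/-- Three continuations lead from any point of `F²` to any other, so that four lead from an arc to
every arc of the following layer. -/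
lemma reachable_succ (u v : Arc F) (h : v.1 = u.1 + 1) : (graph F).Reachable u v := by
  obtain ⟨i, x, y, t⟩ := u
  obtain ⟨i', a, b, c⟩ := v
  -- With `(t, w)` the head of `u`, the points `(r, t r - w)`, `(t + 1, r + w)` and
  -- `(a, (t + 1) a - r - w)` continue the path; the choice of `r` makes the last one `(a, b)`.
  let u : Arc F := (i, x, y, t)
  let r : F := (t + 1) * a - u.head.2 - b
  let u1 := u.next r
  let u2 := u1.next (t + 1)
  let u3 := u2.next a
  have adj : ∀ (w : Arc F) s, (graph F).Reachable w (w.next s) := fun w s =>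
    SimpleGraph.Adj.reachable (Or.inl (follows_next w s))
  refine (adj u r).trans ((adj u1 (t + 1)).trans ((adj u2 a).trans
    (SimpleGraph.Adj.reachable (Or.inl ⟨?_, ?_⟩))))
  · change i' = i + 1 + 1 + 1 + 1
    have h' : i' = i + 1 := h
    have d : ∀ i : Fin 3, i + 1 = i + 1 + 1 + 1 + 1 := by decide
    rw [h']; exact d i
  · simp only [tail, head, next, u2, u1, r, u, Prod.mk.injEq]
    exact ⟨trivial, by ring⟩

lemma graph_connected : (graph F).Connected := by
  have : Nonempty (Arc F) := ⟨(0, 0, 0, 0)⟩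
  refine SimpleGraph.Connected.mk fun u v => ?_
  let z : Fin 3 → Arc F := fun i => (i, 0, 0, 0)
  have d : ∀ i j : Fin 3, j = i + 1 ∨ j = i + 1 + 1 ∨ j = i + 1 + 1 + 1 := by decide
  have h1 : (graph F).Reachable u (z (u.1 + 1)) := reachable_succ _ _ rfl
  have h2 : (graph F).Reachable u (z (u.1 + 1 + 1)) := h1.trans (reachable_succ _ _ rfl)
  rcases d u.1 v.1 with h | h | h
  · exact reachable_succ _ _ h
  · exact h1.trans (reachable_succ _ _ h)
  · exact h2.trans (reachable_succ _ _ h)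

/-! ### Representation by unit segments -/

/-- The unit segment of an arc of layer `i`: it has direction `i + 2`, its `i`-th and `(i + 1)`-st
coordinates are the labels `φ` of its tail and head, and its remaining coordinate runs over
`[0, 1]`. -/
def seg (φ : F × F → ℝ) (v : Arc F) : Set (EuclideanSpace ℝ (Fin 3)) :=
  {q | q v.1 = φ v.tail ∧ q (v.1 + 1) = φ v.head ∧ q (v.1 + 2) ∈ Set.Icc (0 : ℝ) 1}

lemma isUnitAxisSegment_seg (φ : F × F → ℝ) (v : Arc F) : IsUnitAxisSegment (seg φ v) := by
  have d : ∀ i : Fin 3, i + 1 ≠ i ∧ i + 2 ≠ i ∧ i + 1 ≠ i + 2 := by decide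
  have d3 : ∀ i j : Fin 3, j = i ∨ j = i + 1 ∨ j = i + 2 := by decide
  obtain ⟨n1, n2, n3⟩ := d v.1
  refine ⟨WithLp.toLp 2 (fun j => if j = v.1 then φ v.tail else
    if j = v.1 + 1 then φ v.head else 0), v.1 + 2, ?_⟩
  ext q
  simp only [seg, Set.mem_ofPred_eq]
  constructor
  · rintro ⟨h1, h2, h3⟩
    refine ⟨_, h3, ?_⟩
    ext j
    rcases d3 v.1 j with rfl | rfl | rfl
    · simp [h1, n2.symm]
    · simp [h2, n1, n3]
    · simp [n2, n3.symm]
  · rintro ⟨t, ht, rfl⟩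
    refine ⟨?_, ?_, ?_⟩
    · simp [n2.symm]
    · simp [n1, n3]
    · simpa [n2, n3.symm] using ht

lemma seg_inter_of_follows {φ : F × F → ℝ} (h01 : ∀ a, φ a ∈ Set.Icc (0 : ℝ) 1) {u v : Arc F}
    (h : Follows u v) : (seg φ u ∩ seg φ v).Nonempty := by
  have d : ∀ i : Fin 3, i + 1 ≠ i ∧ i + 2 ≠ i ∧ i + 2 ≠ i + 1 ∧ i + 1 + 1 = i + 2 ∧
    i + 1 + 2 = i := by decide
  obtain ⟨n1, n2, n3, e1, e2⟩ := d u.1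
  refine ⟨WithLp.toLp 2 (fun j => if j = u.1 then φ u.tail else
    if j = u.1 + 1 then φ u.head else φ v.head), ⟨?_, ?_, ?_⟩, ⟨?_, ?_, ?_⟩⟩
  · simp
  · simp [n1]
  · simpa [n2, n3] using h01 _
  · simp [h.1, h.2]
  · simp [h.1, e1, n2, n3]
  · simpa [h.1, e2] using h01 _

lemma adj_iff_seg_inter {φ : F × F → ℝ} (hφ : Function.Injective φ)
    (h01 : ∀ a, φ a ∈ Set.Icc (0 : ℝ) 1) (u v : Arc F) :
    (graph F).Adj u v ↔ u ≠ v ∧ (seg φ u ∩ seg φ v).Nonempty := by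
  constructor
  · intro h
    refine ⟨h.ne, ?_⟩
    rcases h with h | h
    · exact seg_inter_of_follows h01 h
    · rw [Set.inter_comm]
      exact seg_inter_of_follows h01 h
  · rintro ⟨hne, q, ⟨u1, u2, -⟩, ⟨v1, v2, -⟩⟩
    have d3 : ∀ i j : Fin 3, j = i ∨ j = i + 1 ∨ i = j + 1 := by decide
    rcases d3 u.1 v.1 with h | h | h
    · rw [h] at v1 v2
      exact absurd (ext_tail_head h.symm (hφ (u1.symm.trans v1)) (hφ (u2.symm.trans v2))) hne
    · rw [h] at v1
      exact Or.inl ⟨h, hφ (v1.symm.trans u2)⟩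
    · rw [h] at u1
      exact Or.inr ⟨h, hφ (u1.symm.trans v2)⟩

end Arc

/-! ### The robber's play -/

/-- The robber's history and current position when, from an initial position `r0`, each move is
`step r C`, for `r` the current position and `C` the cops' latest positions. -/
def robberPlay {V : Type*} {j : ℕ} (F : List V → Fin j → V) (step : V → (Fin j → V) → V)
    (r0 : V) : ℕ → List V × V
  | 0 => ([r0], r0)
  | n + 1 =>
    let p := robberPlay F step r0 n
    (p.1 ++ [step p.2 (F p.1)], step p.2 (F p.1))

lemma robberPlay_fst {V : Type*} {j : ℕ} (F : List V → Fin j → V)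
    (step : V → (Fin j → V) → V) (r0 : V) (n : ℕ) :
    (List.range (n + 1)).map (fun m => (robberPlay F step r0 m).2)
      = (robberPlay F step r0 n).1 := by
  induction n with
  | zero => rfl
  | succ n ih => rw [List.range_succ, List.map_append, ih]; rfl

/-- The robber escapes if there is a relation `D h r` (the cop at `h` holds the robber at `r`),
implied by capture, such that a robber held by no cop always has a move after which no cop can
hold it even with one more cop move. -/
lemma not_copWin_of_escape {V : Type*} (G : SimpleGraph V) {j : ℕ} (D : V → V → Prop)
    (hD : ∀ v, D v v) (hstart : ∀ C : Fin j → V, ∃ e, ∀ i, ¬ D (C i) e)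
    (hstep : ∀ e (C : Fin j → V), (∀ i, ¬ D (C i) e) →
      ∃ f, G.Adj e f ∧ ∀ i h, (h = C i ∨ G.Adj (C i) h) → ¬ D h f) :
    ¬ CopWin G j := by
  classical
  rintro ⟨init, F, hwin⟩
  -- Staying put is the default where no safe move exists, so that the play is legal outright.
  have hex : ∀ e (C : Fin j → V), ∃ f, (f = e ∨ G.Adj e f) ∧
      ((∀ i, ¬ D (C i) e) → ∀ i h, (h = C i ∨ G.Adj (C i) h) → ¬ D h f) := by
    intro e C
    by_cases h : ∀ i, ¬ D (C i) e
    · obtain ⟨f, hf, hs⟩ := hstep e C h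
      exact ⟨f, Or.inr hf, fun _ => hs⟩
    · exact ⟨e, Or.inl rfl, fun h' => absurd h' h⟩
  choose step hlegal hsafe using hex
  obtain ⟨e, he⟩ := hstart init
  set rob : ℕ → V := fun n => (robberPlay F step (step e init) n).2 with hrob
  have hsucc : ∀ n, rob (n + 1) = step (rob n) (copSeq init F rob (n + 1)) := by
    intro n
    simp only [copSeq, hrob, robberPlay_fst]
    rfl
  obtain ⟨hc, n, i, hcap⟩ := hwin rob (fun n => by rw [hsucc]; exact hlegal _ _)
  have inv : ∀ n i h, (h = copSeq init F rob n i ∨ G.Adj (copSeq init F rob n i) h) →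
      ¬ D h (rob n) := by
    intro n
    induction n with
    | zero => exact hsafe e init he
    | succ n ih =>
      rw [hsucc]
      exact hsafe _ _ fun i => ih i _ (hc n i)
  rcases hcap with h | h
  · exact inv n i _ (Or.inl rfl) (h ▸ hD _)
  · exact inv n i _ (hc n i) (h ▸ hD _)

lemma copWin_card {n : ℕ} (G : SimpleGraph (Fin n)) : CopWin G n := by
  refine ⟨id, fun _ => id, fun rob _ => ⟨fun m i => Or.inl ?_, 0, rob 0, Or.inl rfl⟩⟩
  cases m <;> rfl

/-- For every `k` there is a finite connected graph with cop number greater than `k`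
which is an intersection graph of axis-parallel closed unit segments in `ℝ³`; hence
the maximum cop number of the classes 3-GRID and boxicity-3 is unbounded. -/
theorem copNumber_unbounded_unit_segments (k : ℕ) :
    ∃ (n : ℕ) (G : SimpleGraph (Fin n)), G.Connected ∧ k < copNumber G ∧
      ∃ S : Fin n → Set (EuclideanSpace ℝ (Fin 3)),
        (∀ v, IsUnitAxisSegment (S v)) ∧
        ∀ u v, G.Adj u v ↔ u ≠ v ∧ (S u ∩ S v).Nonempty := by
  obtain ⟨p, hkp, hp⟩ := Nat.exists_infinite_primes (k + 1)
  have : Fact p.Prime := ⟨hp⟩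
  have hcard : k < Fintype.card (ZMod p) := by rw [ZMod.card]; omega
  -- The arc graph is transported along `e` to a vertex set of the form `Fin n`.
  let e : Fin (Fintype.card (Arc (ZMod p))) ≃ Arc (ZMod p) := (Fintype.equivFin _).symm
  let G := (Arc.graph (ZMod p)).comap e
  obtain ⟨φ, hφ, h01⟩ : ∃ φ : ZMod p × ZMod p → ℝ, Function.Injective φ ∧
      ∀ a, φ a ∈ Set.Icc (0 : ℝ) 1 := by
    let m := Fintype.equivFin (ZMod p × ZMod p)
    refine ⟨fun a => ((m a : ℕ) + 1 : ℝ)⁻¹, fun a b h => ?_, fun a => ⟨by positivity, ?_⟩⟩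
    · have h' := inv_injective h
      simp only [add_left_inj, Nat.cast_inj] at h'
      exact m.injective (Fin.ext h')
    · exact inv_le_one_of_one_le₀ (by simp)
  refine ⟨_, G, ?_, ?_, fun v => Arc.seg φ (e v), fun v => Arc.isUnitAxisSegment_seg φ _, ?_⟩
  · exact (SimpleGraph.Iso.connected_iff (SimpleGraph.Iso.comap e _)).2 Arc.graph_connected
  · have hno : ∀ j ≤ k, ¬ CopWin G j := by
      intro j hj
      refine not_copWin_of_escape G (fun u v => Arc.SameHead (e u) (e v)) (fun v => ⟨rfl, rfl⟩)
        (fun C => ?_) (fun r C hC => ?_)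
      · obtain ⟨r, hr⟩ := Arc.exists_start (hj.trans_lt hcard) (fun i => e (C i))
        exact ⟨e.symm r, fun i => by simpa using hr i⟩
      · obtain ⟨f, hf, hs⟩ := Arc.exists_safe (hj.trans_lt hcard) (e r) (fun i => e (C i)) hC
        refine ⟨e.symm f, ?_, fun i h hh => ?_⟩
        · change (Arc.graph (ZMod p)).Adj (e r) (e (e.symm f))
          rw [e.apply_symm_apply]
          exact Or.inl hf
        · rw [e.apply_symm_apply]
          exact hs i (e h) (hh.imp (congrArg e) id)
    -- The set of winning numbers is nonempty, so the infimum is attained.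
    have hmem : CopWin G (copNumber G) := Nat.sInf_mem (s := {j | CopWin G j}) ⟨_, copWin_card G⟩
    by_contra hle
    exact hno _ (not_lt.1 hle) hmem
  · intro u v
    rw [← e.injective.ne_iff]
    exact Arc.adj_iff_seg_inter hφ h01 (e u) (e v)
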